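/- arXiv:math/0410112 — 2 statements merged into one kernel-verified Lean document; each statement's English description precedes it below -/
import Mathlib

section
/- Let N ≥ 1 and let μ be a nonzero finite Borel measure on ℝ^N such that all moments of μ exist, i.e. every polynomial function is μ-integrable. Fix m ∈ ℕ. Then there exist an integer r with 1 ≤ r ≤ dim_ℝ Pol_m(ℝ^N), points x₁,…,x_r in the support of μ, and weights λ₁,…,λ_r > 0 such that ∫_{ℝ^N} p(y) μ(dy) = Σ_{j=1}^r λ_j p(x_j) for every polynomial p on ℝ^N of total degree at most m. -/
open MeasureTheory

/-! The integral of a vector-valued function `f` lies in every convex cone containing almost all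
values of `f`, closed or not: otherwise some nonzero functional `φ` is nonnegative on the cone and
nonpositive at `∫ f`, hence `φ ∘ f = 0` almost everywhere, and one may replace the space by the
hyperplane `ker φ` and induct on the dimension. Applied to the cone spanned by the values of `f` on
a conull set, this writes `∫ f` as a conic combination of such values, and Carathéodory's theorem
for cones makes those values linearly independent. Working with cones instead of convex hulls avoids
normalizing the measure and bounds the number of nodes by the dimension instead of the dimension
plus one. Tchakaloff's theorem is the case where the coordinates of `f` form a basis of the
polynomials of degree at most `m`. -/

section SupportingFunctional

variable {E : Type*} [NormedAddCommGroup E] [NormedSpace ℝ E] [FiniteDimensional ℝ E]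

theorem exists_dual_ne_zero_forall_eq_of_affineSpan_ne_top {s : Set E} (hs : s.Nonempty)
    (hspan : affineSpan ℝ s ≠ ⊤) :
    ∃ φ : StrongDual ℝ E, φ ≠ 0 ∧ ∀ x ∈ s, ∀ y ∈ s, φ x = φ y := by
  have hdir : (affineSpan ℝ s).direction ≠ ⊤ := by
    rwa [Ne, AffineSubspace.direction_eq_top_iff_of_nonempty (hs.mono (subset_affineSpan ℝ s))]
  obtain ⟨φ, hφ, hker⟩ := Submodule.exists_le_ker_of_lt_top _ hdir.lt_top
  refine ⟨φ.toContinuousLinearMap, by simpa using hφ, fun x hx y hy => ?_⟩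
  have hxy : φ (x - y) = 0 := hker <| AffineSubspace.vsub_mem_direction
    (subset_affineSpan ℝ s hx) (subset_affineSpan ℝ s hy)
  simpa [sub_eq_zero] using hxy

theorem exists_dual_ne_zero_forall_le_of_convex {s : Set E} (hs : Convex ℝ s) (hne : s.Nonempty)
    {x : E} (hx : x ∉ s) : ∃ φ : StrongDual ℝ E, φ ≠ 0 ∧ ∀ y ∈ s, φ y ≤ φ x := by
  by_cases hspan : affineSpan ℝ s = ⊤
  · exact geometric_hahn_banach_of_nonempty_interior_point hs (fun h => hx (interior_subset h))
      (hs.interior_nonempty_iff_affineSpan_eq_top.2 hspan)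
  obtain ⟨φ, hφ, hconst⟩ := exists_dual_ne_zero_forall_eq_of_affineSpan_ne_top hne hspan
  obtain ⟨y₀, hy₀⟩ := hne
  rcases le_total (φ y₀) (φ x) with h | h
  · exact ⟨φ, hφ, fun y hy => (hconst y hy y₀ hy₀).trans_le h⟩
  · exact ⟨-φ, neg_ne_zero.2 hφ, fun y hy => neg_le_neg (h.trans_eq (hconst y₀ hy₀ y hy))⟩

theorem exists_dual_ne_zero_nonneg_of_notMem_pointedCone {C : PointedCone ℝ E} {x : E}
    (hx : x ∉ C) : ∃ φ : StrongDual ℝ E, φ ≠ 0 ∧ (∀ y ∈ C, 0 ≤ φ y) ∧ φ x ≤ 0 := by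
  obtain ⟨φ, hφ, hle⟩ := exists_dual_ne_zero_forall_le_of_convex C.convex ⟨0, C.zero_mem⟩ hx
  have hx_nonneg : 0 ≤ φ x := by simpa using hle 0 C.zero_mem
  refine ⟨-φ, neg_ne_zero.2 hφ, fun y hy => ?_, neg_nonpos.2 hx_nonneg⟩
  by_contra! hneg
  have hpos : 0 < φ y := by simpa using hneg
  have hscaled : (φ x / φ y + 1) * φ y ≤ φ x := by
    simpa using hle _ (C.smul_mem (by positivity : 0 ≤ φ x / φ y + 1) hy)
  rw [add_mul, div_mul_cancel₀ _ hpos.ne'] at hscaled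
  linarith

end SupportingFunctional

section IntegralMemCone

variable {Ω : Type*} [MeasurableSpace Ω] {μ : Measure Ω}

theorem exists_integrable_ae_eq_coe_of_ae_mem {E : Type*} [NormedAddCommGroup E] [NormedSpace ℝ E]
    {K : Submodule ℝ E} [FiniteDimensional ℝ K] {f : Ω → E} (hf : Integrable f μ)
    (hfK : ∀ᵐ ω ∂μ, f ω ∈ K) :
    ∃ g : Ω → K, Integrable g μ ∧ ∀ᵐ ω ∂μ, f ω = g ω := by
  obtain ⟨π, hπ⟩ : K.ClosedComplemented := .of_finiteDimensional K
  refine ⟨fun ω => π (f ω), π.integrable_comp hf, ?_⟩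
  filter_upwards [hfK] with ω hω
  exact (congrArg Subtype.val (hπ ⟨f ω, hω⟩)).symm

theorem ae_eq_zero_of_nonneg_of_map_integral_nonpos {E : Type*} [NormedAddCommGroup E]
    [NormedSpace ℝ E] [CompleteSpace E] {f : Ω → E} (hf : Integrable f μ) {φ : StrongDual ℝ E}
    (hφf : ∀ᵐ ω ∂μ, 0 ≤ φ (f ω)) (hφ : φ (∫ ω, f ω ∂μ) ≤ 0) : ∀ᵐ ω ∂μ, φ (f ω) = 0 := by
  refine (integral_eq_zero_iff_of_nonneg_ae hφf (φ.integrable_comp hf)).1 ?_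
  exact le_antisymm ((φ.integral_comp_comm hf).trans_le hφ) (integral_nonneg_of_ae hφf)

theorem integral_mem_pointedCone {E : Type*} [NormedAddCommGroup E] [NormedSpace ℝ E]
    [FiniteDimensional ℝ E] (C : PointedCone ℝ E) {f : Ω → E} (hf : Integrable f μ)
    (hfC : ∀ᵐ ω ∂μ, f ω ∈ C) : ∫ ω, f ω ∂μ ∈ C := by
  induction hn : Module.finrank ℝ E using Nat.strong_induction_on generalizing E with
  | _ n ih =>
  by_contra hmem
  have := FiniteDimensional.complete ℝ E
  obtain ⟨φ, hφ, hφC, hφf⟩ := exists_dual_ne_zero_nonneg_of_notMem_pointedCone hmem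
  have hker : ∀ᵐ ω ∂μ, f ω ∈ φ.ker :=
    ae_eq_zero_of_nonneg_of_map_integral_nonpos hf (hfC.mono fun ω => hφC (f ω)) hφf
  obtain ⟨g, hg, hfg⟩ := exists_integrable_ae_eq_coe_of_ae_mem hf hker
  have hgC : ∀ᵐ ω ∂μ, g ω ∈ C.comap φ.ker.subtype := by
    filter_upwards [hfC, hfg] with ω hω hfgω
    simpa [hfgω] using hω
  have hlt : Module.finrank ℝ φ.ker < n :=
    hn ▸ Submodule.finrank_lt (mt LinearMap.ker_eq_top.1 (by exact_mod_cast hφ))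
  have hmemK : ((∫ ω, g ω ∂μ : φ.ker) : E) ∈ C := ih _ hlt _ hg hgC rfl
  rw [integral_congr_ae hfg] at hmem
  exact hmem ((φ.ker.subtypeL.integral_comp_comm hg).symm ▸ hmemK)

end IntegralMemCone

section ConicCaratheodory

open Finsupp

variable {𝕜 ι E : Type*} [Field 𝕜] [LinearOrder 𝕜] [IsStrictOrderedRing 𝕜] [AddCommGroup E]
  [Module 𝕜 E]

theorem exists_nonneg_linearCombination_of_mem_hull_image {v : ι → E} {s : Set ι} {x : E}
    (hx : x ∈ PointedCone.hull 𝕜 (v '' s)) :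
    ∃ c : ι →₀ 𝕜, 0 ≤ c ∧ ↑c.support ⊆ s ∧ linearCombination 𝕜 v c = x := by
  let C : PointedCone 𝕜 E :=
    (PointedCone.positive 𝕜 (ι →₀ 𝕜) ⊓ PointedCone.ofSubmodule (supported 𝕜 𝕜 s)).map
      (linearCombination 𝕜 v)
  have hle : PointedCone.hull 𝕜 (v '' s) ≤ C := by
    refine Submodule.span_le.2 ?_
    rintro _ ⟨i, hi, rfl⟩
    exact PointedCone.mem_map.2 ⟨single i 1, ⟨single_nonneg.2 zero_le_one,
      single_mem_supported 𝕜 1 hi⟩, by simp⟩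
  obtain ⟨c, ⟨hc, hcs⟩, hcx⟩ := PointedCone.mem_map.1 (hle hx)
  exact ⟨c, hc, hcs, hcx⟩

theorem exists_finsupp_pos_of_not_linearIndepOn {v : ι → E} {t : Finset ι}
    (ht : ¬LinearIndepOn 𝕜 v ↑t) :
    ∃ g : ι →₀ 𝕜, g.support ⊆ t ∧ linearCombination 𝕜 v g = 0 ∧ ∃ i, 0 < g i := by
  obtain ⟨g, hgt, hgv, hg⟩ : ∃ g ∈ supported 𝕜 𝕜 (t : Set ι),
      linearCombination 𝕜 v g = 0 ∧ g ≠ 0 := by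
    simpa [linearIndepOn_iff] using ht
  obtain ⟨i, hi⟩ := Finsupp.ne_iff.1 hg
  rcases lt_or_gt_of_ne hi with hneg | hpos
  · exact ⟨-g, by simpa [mem_supported] using hgt, by simp [hgv], i, by simpa using hneg⟩
  · exact ⟨g, by simpa [mem_supported] using hgt, hgv, i, hpos⟩

theorem exists_smul_le_support_sub_ssubset {c g : ι →₀ 𝕜} (hc : 0 ≤ c)
    (hgc : g.support ⊆ c.support) (hg : ∃ i, 0 < g i) :
    ∃ a : 𝕜, a • g ≤ c ∧ (c - a • g).support ⊂ c.support := by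
  classical
  obtain ⟨i, hi⟩ := hg
  -- The largest `a` with `a • g ≤ c` is the least ratio `c j / g j` over `0 < g j`.
  obtain ⟨k, hk, hmin⟩ := {j ∈ c.support | 0 < g j}.exists_min_image (fun j => c j / g j)
    ⟨i, Finset.mem_filter.2 ⟨hgc (mem_support_iff.2 hi.ne'), hi⟩⟩
  obtain ⟨hkc, hgk⟩ := Finset.mem_filter.1 hk
  refine ⟨c k / g k, fun j => ?_, ?_, fun hsub => ?_⟩
  · rcases le_or_gt (g j) 0 with hgj | hgj
    · exact (mul_nonpos_of_nonneg_of_nonpos (div_nonneg (hc k) hgk.le) hgj).trans (hc j)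
    · exact (le_div_iff₀ hgj).1 <|
        hmin j (Finset.mem_filter.2 ⟨hgc (mem_support_iff.2 hgj.ne'), hgj⟩)
  · exact support_sub.trans (Finset.union_subset subset_rfl (support_smul.trans hgc))
  · exact mem_support_iff.1 (hsub hkc) (by simp [div_mul_cancel₀ _ hgk.ne'])

theorem exists_linearIndepOn_support_of_mem_hull_image {v : ι → E} {s : Set ι} {x : E}
    (hx : x ∈ PointedCone.hull 𝕜 (v '' s)) :
    ∃ c : ι →₀ 𝕜, 0 ≤ c ∧ ↑c.support ⊆ s ∧ LinearIndepOn 𝕜 v ↑c.support ∧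
      linearCombination 𝕜 v c = x := by
  obtain ⟨c, ⟨hc, hcs, hcx⟩, hmin⟩ := exists_minimalFor_of_wellFoundedLT _
    (fun c : ι →₀ 𝕜 => c.support) (exists_nonneg_linearCombination_of_mem_hull_image hx)
  refine ⟨c, hc, hcs, ?_, hcx⟩
  by_contra hdep
  obtain ⟨g, hgc, hgv, hg⟩ := exists_finsupp_pos_of_not_linearIndepOn hdep
  obtain ⟨a, hac, hlt⟩ := exists_smul_le_support_sub_ssubset hc hgc hg
  refine hlt.not_subset (hmin ⟨sub_nonneg.2 hac, ?_, ?_⟩ hlt.subset)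
  · exact (Finset.coe_subset.2 hlt.subset).trans hcs
  · simp [hgv, hcx]

end ConicCaratheodory

section Quadrature

variable {Ω : Type*} [MeasurableSpace Ω] {μ : Measure Ω} {S : Set Ω}

theorem exists_integral_eq_sum_smul {E : Type*} [NormedAddCommGroup E] [NormedSpace ℝ E]
    [FiniteDimensional ℝ E] {f : Ω → E} (hf : Integrable f μ) (hS : ∀ᵐ ω ∂μ, ω ∈ S) :
    ∃ r ≤ Module.finrank ℝ E, ∃ (x : Fin r → Ω) (lam : Fin r → ℝ),
      (∀ j, 0 < lam j) ∧ (∀ j, x j ∈ S) ∧ ∫ ω, f ω ∂μ = ∑ j, lam j • f (x j) := by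
  have hmem : ∫ ω, f ω ∂μ ∈ PointedCone.hull ℝ (f '' S) :=
    integral_mem_pointedCone _ hf <|
      hS.mono fun ω hω => PointedCone.subset_hull (Set.mem_image_of_mem f hω)
  obtain ⟨c, hc, hcS, hind, hcf⟩ := exists_linearIndepOn_support_of_mem_hull_image hmem
  let e := c.support.equivFin.symm
  refine ⟨c.support.card, ?_, fun j => e j, fun j => c (e j), fun j => ?_,
    fun j => hcS (e j).2, ?_⟩
  · simpa using hind.fintype_card_le_finrank
  · exact (hc _).lt_of_ne' (Finsupp.mem_support_iff.1 (e j).2)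
  · rw [← hcf, Finsupp.linearCombination_apply, Finsupp.sum, ← Finset.sum_coe_sort]
    exact (e.sum_comp fun ω => c ω • f ω).symm

theorem tchakaloff_general {V : Type*} [AddCommGroup V] [Module ℝ V] [FiniteDimensional ℝ V]
    (Φ : V →ₗ[ℝ] Ω → ℝ) (hΦ : ∀ v, Integrable (Φ v) μ) (hne : ∃ v, ∫ ω, Φ v ω ∂μ ≠ 0)
    (hS : ∀ᵐ ω ∂μ, ω ∈ S) :
    ∃ r, 1 ≤ r ∧ r ≤ Module.finrank ℝ V ∧ ∃ (x : Fin r → Ω) (lam : Fin r → ℝ),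
      (∀ j, 0 < lam j) ∧ (∀ j, x j ∈ S) ∧ ∀ v, ∫ ω, Φ v ω ∂μ = ∑ j, lam j * Φ v (x j) := by
  let b := Module.finBasis ℝ V
  obtain ⟨r, hr, x, lam, hlam, hx, hsum⟩ := exists_integral_eq_sum_smul
    (f := fun ω i => Φ (b i) ω) (Integrable.of_eval fun i => hΦ (b i)) hS
  let I : V →ₗ[ℝ] ℝ :=
    { toFun v := ∫ ω, Φ v ω ∂μ
      map_add' v w := by simpa using integral_add (hΦ v) (hΦ w)
      map_smul' a v := by simpa using integral_const_mul a (Φ v) }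
  have hI : I = ∑ j, lam j • LinearMap.proj (x j) ∘ₗ Φ := b.ext fun i => by
    simpa [I, eval_integral fun i => hΦ (b i)] using congrFun hsum i
  have hquad (v : V) : ∫ ω, Φ v ω ∂μ = ∑ j, lam j * Φ v (x j) := by
    simpa [I] using LinearMap.congr_fun hI v
  refine ⟨r, Nat.one_le_iff_ne_zero.2 ?_, by simpa using hr, x, lam, hlam, hx, hquad⟩
  rintro rfl
  obtain ⟨v, hv⟩ := hne
  exact hv (by simpa using hquad v)

end Quadrature

/-- Evaluation of the polynomials of total degree at most `m` as a linear map into functions, so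
that these polynomials form a linear family of functions in the sense of `tchakaloff_general`. -/
noncomputable def evalRestrictTotalDegree (σ R : Type*) [CommSemiring R] (m : ℕ) :
    MvPolynomial.restrictTotalDegree σ R m →ₗ[R] (σ → R) → R where
  toFun p y := MvPolynomial.eval y (p : MvPolynomial σ R)
  map_add' p q := by ext; simp
  map_smul' a p := by ext; simp

/-- **Tchakaloff's theorem.** Let `N ≥ 1` and let `μ` be a nonzero finite
Borel measure on `ℝ^N` all of whose moments exist (every polynomial function is
`μ`-integrable). Fix `m`. Then there are `1 ≤ r ≤ dim_ℝ Pol_m(ℝ^N)`, points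
`x₁,…,x_r` in the support of `μ` (every neighborhood of each `x_j` has positive
measure) and weights `λ_j > 0` with `∫ p dμ = ∑_j λ_j p(x_j)` for every polynomial `p`
of total degree at most `m`. -/
theorem tchakaloff (N : ℕ) (hN : 1 ≤ N) (μ : Measure (Fin N → ℝ)) [IsFiniteMeasure μ]
    (hμ : μ ≠ 0)
    (hmom : ∀ p : MvPolynomial (Fin N) ℝ, Integrable (fun y => MvPolynomial.eval y p) μ)
    (m : ℕ) :
    ∃ r : ℕ, 1 ≤ r ∧
      r ≤ Module.finrank ℝ (MvPolynomial.restrictTotalDegree (Fin N) ℝ m) ∧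
      ∃ x : Fin r → (Fin N → ℝ), ∃ lam : Fin r → ℝ,
        (∀ j, 0 < lam j) ∧
        (∀ j, ∀ U : Set (Fin N → ℝ), IsOpen U → x j ∈ U → 0 < μ U) ∧
        ∀ p : MvPolynomial (Fin N) ℝ, p.totalDegree ≤ m →
          ∫ y, MvPolynomial.eval y p ∂μ = ∑ j, lam j * MvPolynomial.eval (x j) p := by
  have hone : ∃ p, ∫ y, evalRestrictTotalDegree (Fin N) ℝ m p y ∂μ ≠ 0 :=
    ⟨⟨1, by simp [MvPolynomial.mem_restrictTotalDegree]⟩,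
      by simpa [evalRestrictTotalDegree, measureReal_eq_zero_iff] using hμ⟩
  obtain ⟨r, hr, hrm, x, lam, hlam, hx, hquad⟩ :=
    tchakaloff_general (evalRestrictTotalDegree (Fin N) ℝ m) (fun p => hmom p) hone
      Measure.support_mem_ae
  exact ⟨r, hr, hrm, x, lam, hlam,
    fun j U hU hxU => (Measure.mem_support_iff_forall _).1 (hx j) U (hU.mem_nhds hxU),
    fun p hp => hquad ⟨p, (MvPolynomial.mem_restrictTotalDegree _ _ _).2 hp⟩⟩
end

section
/- Taylor expansion of solutions of non-autonomous ODEs driven by smooth paths: let V₀,…,V_d : ℝ^N → ℝ^N be C^∞-bounded vector fields, let ω = (ω⁰,…,ω^d) : [0,T] → ℝ^{d+1} be a C¹ path, let y ∈ ℝ^N, and let Z : [0,T] → ℝ^N be the (unique, globally defined) solution of Z'(t) = Σ_{i=0}^d V_i(Z(t))·(ωⁱ)'(t) with Z(0) = y. Then for every f ∈ C_b^∞(ℝ^N), every n ≥ 0 and every t ∈ [0,T]: f(Z(t)) = Σ_{I : deg(I) ≤ n} (V_{i₁}⋯V_{i_k} f)(y) · ∫_{0≤t₁≤⋯≤t_k≤t}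 (ω^{i₁})'(t₁)⋯(ω^{i_k})'(t_k) dt₁⋯dt_k + R_n(t,f), where the sum runs over all words I = (i₁,…,i_k) with deg(I) ≤ n (the empty word contributing f(y)), and R_n(t,f) = Σ ∫_{0≤t₀≤t₁≤⋯≤t_k≤t} (V_{i₀}V_{i₁}⋯V_{i_k} f)(Z(t₀)) · (ω^{i₀})'(t₀)⋯(ω^{i_k})'(t_k) dt₀⋯dt_k, the last sum running over all words (i₀,i₁,…,i_k) with deg(i₁,…,i_k) ≤ n and deg(i₀,i₁,…,i_k) > n. -/
open MeasureTheory

noncomputable section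

/-- The degree of a letter in `{0,…,d}`: the letter `0` counts twice. -/
def letterDeg (d : ℕ) (i : Fin (d + 1)) : ℕ := if i = 0 then 2 else 1

/-- The degree `deg(I)` of a word `I = (i₁,…,i_k)`. -/
def wordDeg (d : ℕ) (I : List (Fin (d + 1))) : ℕ := (I.map (letterDeg d)).sum

/-- The action of a word of vector fields on a function:
`vfAct V (i₁,…,i_k) f = V_{i₁} ⋯ V_{i_k} f`, where a vector field `V` acts as the
first-order differential operator `(V f)(x) = df(x)·V(x)`. -/
def vfAct (N d : ℕ) (V : Fin (d + 1) → (Fin N → ℝ) → (Fin N → ℝ)) :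
    List (Fin (d + 1)) → ((Fin N → ℝ) → ℝ) → ((Fin N → ℝ) → ℝ)
  | [], f => f
  | i :: rest, f => fun x => fderiv ℝ (vfAct N d V rest f) x (V i x)

/-- The iterated integral `∫_{0≤t₁≤⋯≤t_k≤s} g(t₁)·ω^{j₁}'(t₁)⋯ω^{j_k}'(t_k) dt₁⋯dt_k`
with an extra integrand `g` of the innermost variable; the word is given with the
**outermost** integration variable first (i.e. for a word `I = (i₁,…,i_k)` one applies
this to `I.reverse`). -/
def itIntF (d : ℕ) (ω : Fin (d + 1) → ℝ → ℝ) (g : ℝ → ℝ) :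
    List (Fin (d + 1)) → ℝ → ℝ
  | [], s => g s
  | i :: rest, s => ∫ u in (0 : ℝ)..s, deriv (ω i) u * itIntF d ω g rest u

/-!
Along the solution, `g ∘ Z` has derivative `∑ i, u i • (V_i g) ∘ Z`, so the fundamental theorem of
calculus gives `g (Z s) = g (Z a) + ∑ i, ∫ r in a..s, u i r • (V_i g) (Z r)`. Applied to
`g = V_w f` inside the iterated integral over `w`, this splits a term of the expansion into its
Taylor term at `Z a` and a sum of terms over the words `i :: w`. Starting from the empty word, the
splitting is repeated exactly on the words of degree at most `n`. It stops because the degree of a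
word dominates its length, and the unsplit terms are the remainder.
-/

open Set
open scoped Interval

section WordSums

variable {ι M : Type*} [Fintype ι] [AddCommMonoid M]

theorem sum_ofFn_succ (A : List ι → M) (k : ℕ) :
    ∑ v : Fin (k + 1) → ι, A (List.ofFn v) = ∑ v : Fin k → ι, ∑ i, A (i :: List.ofFn v) := by
  rw [← (Fin.consEquiv fun _ => ι).sum_comp, Fintype.sum_prod_type_right]
  simp only [Fin.consEquiv, Equiv.coe_fn_mk, List.ofFn_cons]

variable {P : List ι → Prop} [DecidablePred P] {A C : List ι → M}

theorem ite_word_eq_add_sum_cons (hP : ∀ i w, P (i :: w) → P w)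
    (hA : ∀ w, P w → A w = C w + ∑ i, A (i :: w)) (w : List ι) :
    (if P w then A w else 0) =
      (if P w then C w else 0) + (∑ i, if P w ∧ ¬P (i :: w) then A (i :: w) else 0) +
        ∑ i, if P (i :: w) then A (i :: w) else 0 := by
  by_cases hw : P w
  · simp only [hw, if_true, true_and, hA w hw, add_assoc, ← Finset.sum_add_distrib, ite_not]
    congr 1
    refine Finset.sum_congr rfl fun i _ => ?_
    split <;> simp
  · simp [hw, fun i => mt (hP i w) hw]

theorem sum_words_length_eq_add_sum_words_length_succ (hP : ∀ i w, P (i :: w) → P w)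
    (hA : ∀ w, P w → A w = C w + ∑ i, A (i :: w)) (k : ℕ) :
    (∑ v : Fin k → ι, if P (List.ofFn v) then A (List.ofFn v) else 0) =
      (∑ v : Fin k → ι, if P (List.ofFn v) then C (List.ofFn v) else 0) +
        (∑ v : Fin k → ι, ∑ i,
          if P (List.ofFn v) ∧ ¬P (i :: List.ofFn v) then A (i :: List.ofFn v) else 0) +
        ∑ v : Fin (k + 1) → ι, if P (List.ofFn v) then A (List.ofFn v) else 0 := by
  rw [sum_ofFn_succ fun w => if P w then A w else 0, ← Finset.sum_add_distrib,
    ← Finset.sum_add_distrib]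
  exact Finset.sum_congr rfl fun v _ => ite_word_eq_add_sum_cons hP hA _

theorem eq_sum_words_add_sum_boundary_add_sum_length (hP : ∀ i w, P (i :: w) → P w)
    (hA : ∀ w, P w → A w = C w + ∑ i, A (i :: w)) (hnil : P []) (m : ℕ) :
    A [] =
      (∑ k ∈ Finset.range m, ∑ v : Fin k → ι, if P (List.ofFn v) then C (List.ofFn v) else 0) +
        (∑ k ∈ Finset.range m, ∑ v : Fin k → ι, ∑ i,
          if P (List.ofFn v) ∧ ¬P (i :: List.ofFn v) then A (i :: List.ofFn v) else 0) +
        ∑ v : Fin m → ι, if P (List.ofFn v) then A (List.ofFn v) else 0 := by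
  induction m with
  | zero => simp [hnil]
  | succ m ih =>
    rw [ih, sum_words_length_eq_add_sum_words_length_succ hP hA m, Finset.sum_range_succ,
      Finset.sum_range_succ]
    abel

theorem eq_sum_words_add_sum_boundary (hP : ∀ i w, P (i :: w) → P w)
    (hA : ∀ w, P w → A w = C w + ∑ i, A (i :: w)) (hnil : P []) {n : ℕ}
    (hlen : ∀ w, P w → w.length ≤ n) :
    A [] =
      (∑ k ∈ Finset.range (n + 1), ∑ v : Fin k → ι,
        if P (List.ofFn v) then C (List.ofFn v) else 0) +
        ∑ k ∈ Finset.range (n + 1), ∑ v : Fin k → ι, ∑ i,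
          if P (List.ofFn v) ∧ ¬P (i :: List.ofFn v) then A (i :: List.ofFn v) else 0 := by
  have hlong : ∀ v : Fin (n + 1) → ι, ¬P (List.ofFn v) := fun v hv => by
    simpa using hlen _ hv
  simpa only [hlong, if_false, Finset.sum_const_zero, add_zero] using
    eq_sum_words_add_sum_boundary_add_sum_length hP hA hnil (n + 1)

end WordSums

theorem length_le_sum_map {ι : Type*} {deg : ι → ℕ} (hdeg : ∀ i, 1 ≤ deg i) (w : List ι) :
    w.length ≤ (w.map deg).sum := by
  simpa using List.length_le_sum_of_one_le (w.map deg) (by simpa using fun i _ => hdeg i)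

section FieldDeriv

variable {E F : Type*} [NormedAddCommGroup E] [NormedSpace ℝ E] [NormedAddCommGroup F]
  [NormedSpace ℝ F]

/-- The function `Vg` obtained by letting the vector field `V` act on `g` as a first-order
differential operator. -/
def fieldDeriv (V : E → E) (g : E → F) : E → F := fun x => fderiv ℝ g x (V x)

theorem contDiff_fieldDeriv {V : E → E} {g : E → F} {m k : WithTop ℕ∞} (hV : ContDiff ℝ m V)
    (hg : ContDiff ℝ k g) (hmk : m + 1 ≤ k) : ContDiff ℝ m (fieldDeriv V g) :=
  (hg.fderiv_right hmk).clm_apply hV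

variable {ι : Type*}

/-- The function `V_{i₁} ⋯ V_{i_k} f` for the word `(i₁, …, i_k)`: the last letter acts first. -/
def wordDeriv (V : ι → E → E) (w : List ι) (f : E → F) : E → F :=
  w.foldr (fun i => fieldDeriv (V i)) f

theorem contDiff_wordDeriv {V : ι → E → E} {f : E → F} {n : ℕ} (hV : ∀ i, ContDiff ℝ n (V i))
    (hf : ContDiff ℝ (n + 1) f) (w : List ι) {m : ℕ} (hm : w.length + m ≤ n + 1) :
    ContDiff ℝ m (wordDeriv V w f) := by
  induction w generalizing m with
  | nil => exact hf.of_le (by rw [List.length_nil, zero_add] at hm; exact_mod_cast hm)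
  | cons i w ih =>
    rw [List.length_cons] at hm
    have hVi : ContDiff ℝ m (V i) := (hV i).of_le (by exact_mod_cast (by omega : m ≤ n))
    exact contDiff_fieldDeriv hVi (ih (m := m + 1) (by omega)) (by norm_cast)

variable [Fintype ι] {V : ι → E → E} {u : ι → ℝ → ℝ} {Z : ℝ → E} {a b : ℝ}

theorem hasDerivWithinAt_comp_integralCurve {S : Set ℝ}
    (hZ : IsIntegralCurveOn Z (fun s x => ∑ i, u i s • V i x) S) {s : ℝ} (hs : s ∈ S) {g : E → F}
    (hg : DifferentiableAt ℝ g (Z s)) :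
    HasDerivWithinAt (fun r => g (Z r)) (∑ i, u i s • fieldDeriv (V i) g (Z s)) S s := by
  simpa only [map_sum, map_smul, fieldDeriv, Function.comp_def] using
    hg.hasFDerivAt.comp_hasDerivWithinAt s (hZ s hs)

theorem integral_eq_sub_of_hasDerivWithinAt_uIcc [CompleteSpace F] {h h' : ℝ → F}
    (hh : ∀ s ∈ [[a, b]], HasDerivWithinAt h (h' s) [[a, b]] s)
    (hint : IntervalIntegrable h' volume a b) : ∫ s in a..b, h' s = h b - h a :=
  intervalIntegral.integral_eq_sub_of_hasDeriv_right
    (fun s hs => (hh s hs).continuousWithinAt)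
    (fun s hs => ((hh s (Ioo_subset_Icc_self hs)).hasDerivAt
      (Icc_mem_nhds hs.1 hs.2)).hasDerivWithinAt) hint

theorem continuousOn_smul_fieldDeriv_comp {g : E → F} (hg : ContDiff ℝ 1 g) {W : E → E}
    (hW : Continuous W) {c : ℝ → ℝ} {S : Set ℝ} (hc : ContinuousOn c S) (hZ : ContinuousOn Z S) :
    ContinuousOn (fun s => c s • fieldDeriv W g (Z s)) S :=
  hc.smul ((contDiff_fieldDeriv (m := 0) (contDiff_zero.2 hW) hg
    (by simp)).continuous.comp_continuousOn hZ)

theorem comp_integralCurve_eq_add_sum_integral [CompleteSpace F] {g : E → F}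
    (hg : ContDiff ℝ 1 g) (hV : ∀ i, Continuous (V i)) (hu : ∀ i, ContinuousOn (u i) [[a, b]])
    (hZ : IsIntegralCurveOn Z (fun s x => ∑ i, u i s • V i x) [[a, b]]) :
    g (Z b) = g (Z a) + ∑ i, ∫ s in a..b, u i s • fieldDeriv (V i) g (Z s) := by
  have hcont : ∀ i, ContinuousOn (fun s => u i s • fieldDeriv (V i) g (Z s)) [[a, b]] := fun i =>
    continuousOn_smul_fieldDeriv_comp hg (hV i) (hu i) hZ.continuousOn
  rw [← intervalIntegral.integral_finsetSum fun i _ => (hcont i).intervalIntegrable,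
    integral_eq_sub_of_hasDerivWithinAt_uIcc
      (fun _ hs => hasDerivWithinAt_comp_integralCurve hZ hs (hg.differentiable one_ne_zero _))
      (continuousOn_finsetSum _ fun i _ => hcont i).intervalIntegrable, add_sub_cancel]

end FieldDeriv

section IteratedIntegral

variable {ι F : Type*} [NormedAddCommGroup F] [NormedSpace ℝ F] {u : ι → ℝ → ℝ} {a b : ℝ}

/-- The iterated integral `∫ g(t₁) u_{i₁}(t₁) ⋯ u_{i_k}(t_k) dt₁ ⋯ dt_k` over the simplex
`a ≤ t₁ ≤ ⋯ ≤ t_k ≤ s`, as a function of `s` (oriented integrals when `s < a`): the first letter of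
the word `(i₁, …, i_k)` carries the innermost integration variable, which is also that of `g`. -/
def iteratedIntegral (u : ι → ℝ → ℝ) (a : ℝ) (w : List ι) (g : ℝ → F) : ℝ → F :=
  w.foldl (fun h i s => ∫ r in a..s, u i r • h r) g

theorem iteratedIntegral_cons (i : ι) (w : List ι) (g : ℝ → F) :
    iteratedIntegral u a (i :: w) g =
      iteratedIntegral u a w fun s => ∫ r in a..s, u i r • g r :=
  rfl

theorem iteratedIntegral_congr {g h : ℝ → F} (hgh : EqOn g h [[a, b]]) (w : List ι) :
    EqOn (iteratedIntegral u a w g) (iteratedIntegral u a w h) [[a, b]] := by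
  induction w generalizing g h with
  | nil => exact hgh
  | cons i _ ih =>
    refine ih fun s hs => intervalIntegral.integral_congr fun r hr => ?_
    simp only [hgh (uIcc_subset_uIcc_left hs hr)]

theorem iteratedIntegral_zero (w : List ι) :
    iteratedIntegral u a w (fun _ => (0 : F)) = fun _ => 0 := by
  induction w with
  | nil => rfl
  | cons _ _ ih => simpa [iteratedIntegral_cons] using ih

theorem iteratedIntegral_smul_const [CompleteSpace F] (w : List ι) (g : ℝ → ℝ) (c : F) :
    iteratedIntegral u a w (fun s => g s • c) = fun s => iteratedIntegral u a w g s • c := by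
  induction w generalizing g with
  | nil => rfl
  | cons i w ih =>
    simp only [iteratedIntegral_cons, ← ih, ← intervalIntegral.integral_smul_const, smul_assoc]

theorem continuousOn_integral_uIcc {h : ℝ → F} (hh : ContinuousOn h [[a, b]]) :
    ContinuousOn (fun s => ∫ r in a..s, h r) [[a, b]] :=
  intervalIntegral.continuousOn_primitive_interval (hh.integrableOn_compact isCompact_uIcc)

theorem iteratedIntegral_add (hu : ∀ i, ContinuousOn (u i) [[a, b]]) {g h : ℝ → F}
    (hg : ContinuousOn g [[a, b]]) (hh : ContinuousOn h [[a, b]]) (w : List ι) {s : ℝ}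
    (hs : s ∈ [[a, b]]) :
    iteratedIntegral u a w (fun r => g r + h r) s =
      iteratedIntegral u a w g s + iteratedIntegral u a w h s := by
  induction w generalizing g h with
  | nil => rfl
  | cons i w ih =>
    have hug : ContinuousOn (fun r => u i r • g r) [[a, b]] := (hu i).smul hg
    have huh : ContinuousOn (fun r => u i r • h r) [[a, b]] := (hu i).smul hh
    have hsplit : EqOn (fun q => ∫ r in a..q, u i r • (g r + h r))
        (fun q => (∫ r in a..q, u i r • g r) + ∫ r in a..q, u i r • h r) [[a, b]] := by
      intro q hq
      simp only [smul_add]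
      exact intervalIntegral.integral_add
        (hug.mono (uIcc_subset_uIcc_left hq)).intervalIntegrable
        (huh.mono (uIcc_subset_uIcc_left hq)).intervalIntegrable
    exact (iteratedIntegral_congr hsplit w hs).trans
      (ih (continuousOn_integral_uIcc hug) (continuousOn_integral_uIcc huh))

theorem iteratedIntegral_finsetSum {κ : Type*} (hu : ∀ i, ContinuousOn (u i) [[a, b]])
    {g : κ → ℝ → F} (hg : ∀ j, ContinuousOn (g j) [[a, b]]) (t : Finset κ) (w : List ι) {s : ℝ}
    (hs : s ∈ [[a, b]]) :
    iteratedIntegral u a w (fun r => ∑ j ∈ t, g j r) s =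
      ∑ j ∈ t, iteratedIntegral u a w (g j) s := by
  induction t using Finset.cons_induction with
  | empty => simp only [Finset.sum_empty, iteratedIntegral_zero]
  | cons j t hj ih =>
    simp only [Finset.sum_cons]
    rw [iteratedIntegral_add hu (hg j) (continuousOn_finsetSum t fun j _ => hg j) w hs, ih]

end IteratedIntegral

section TaylorExpansion

variable {ι E F : Type*} [Fintype ι] [NormedAddCommGroup E] [NormedSpace ℝ E]
  [NormedAddCommGroup F] [NormedSpace ℝ F] [CompleteSpace F]
  {V : ι → E → E} {u : ι → ℝ → ℝ} {Z : ℝ → E} {a b : ℝ}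

theorem iteratedIntegral_comp_integralCurve {g : E → F} (hg : ContDiff ℝ 1 g)
    (hV : ∀ i, Continuous (V i)) (hu : ∀ i, ContinuousOn (u i) [[a, b]])
    (hZ : IsIntegralCurveOn Z (fun s x => ∑ i, u i s • V i x) [[a, b]]) (w : List ι) :
    iteratedIntegral u a w (fun s => g (Z s)) b =
      iteratedIntegral u a w (fun _ => (1 : ℝ)) b • g (Z a) +
        ∑ i, iteratedIntegral u a (i :: w) (fun s => fieldDeriv (V i) g (Z s)) b := by
  have hprim : ∀ i, ContinuousOn
      (fun s => ∫ r in a..s, u i r • fieldDeriv (V i) g (Z r)) [[a, b]] := fun i =>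
    continuousOn_integral_uIcc
      (continuousOn_smul_fieldDeriv_comp hg (hV i) (hu i) hZ.continuousOn)
  have hexpand : EqOn (fun s => g (Z s)) (fun s => (1 : ℝ) • g (Z a) +
      ∑ i, ∫ r in a..s, u i r • fieldDeriv (V i) g (Z r)) [[a, b]] := fun s hs => by
    have hsub : [[a, s]] ⊆ [[a, b]] := uIcc_subset_uIcc_left hs
    simpa only [one_smul] using comp_integralCurve_eq_add_sum_integral hg hV
      (fun i => (hu i).mono hsub) (hZ.mono hsub)
  rw [iteratedIntegral_congr hexpand w right_mem_uIcc,
    iteratedIntegral_add hu continuousOn_const (continuousOn_finsetSum _ fun i _ => hprim i) w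
      right_mem_uIcc,
    iteratedIntegral_finsetSum hu hprim Finset.univ w right_mem_uIcc,
    iteratedIntegral_smul_const w (fun _ => 1)]
  simp only [iteratedIntegral_cons]

theorem taylor_expansion_ODE_general {deg : ι → ℕ} (hdeg : ∀ i, 1 ≤ deg i) {n : ℕ}
    (hV : ∀ i, ContDiff ℝ n (V i)) (hu : ∀ i, ContinuousOn (u i) [[a, b]])
    (hZ : IsIntegralCurveOn Z (fun s x => ∑ i, u i s • V i x) [[a, b]]) {f : E → F}
    (hf : ContDiff ℝ (n + 1) f) :
    f (Z b) =
      (∑ k ∈ Finset.range (n + 1), ∑ v : Fin k → ι,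
        if ((List.ofFn v).map deg).sum ≤ n then
          iteratedIntegral u a (List.ofFn v) (fun _ => (1 : ℝ)) b •
            wordDeriv V (List.ofFn v) f (Z a)
        else 0) +
      ∑ k ∈ Finset.range (n + 1), ∑ v : Fin k → ι, ∑ i₀,
        if ((List.ofFn v).map deg).sum ≤ n ∧ n < ((i₀ :: List.ofFn v).map deg).sum then
          iteratedIntegral u a (i₀ :: List.ofFn v)
            (fun s => wordDeriv V (i₀ :: List.ofFn v) f (Z s)) b
        else 0 := by
  have hlen : ∀ w : List ι, (w.map deg).sum ≤ n → w.length ≤ n := fun w hw =>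
    (length_le_sum_map hdeg w).trans hw
  have hsplit : ∀ w : List ι, (w.map deg).sum ≤ n →
      iteratedIntegral u a w (fun s => wordDeriv V w f (Z s)) b =
        iteratedIntegral u a w (fun _ => (1 : ℝ)) b • wordDeriv V w f (Z a) +
          ∑ i, iteratedIntegral u a (i :: w) (fun s => wordDeriv V (i :: w) f (Z s)) b :=
    fun w hw => iteratedIntegral_comp_integralCurve
      (contDiff_wordDeriv (m := 1) hV hf w (Nat.succ_le_succ (hlen w hw)))
      (fun i => (hV i).continuous) hu hZ w
  change iteratedIntegral u a [] (fun s => wordDeriv V [] f (Z s)) b = _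
  simpa only [not_le] using eq_sum_words_add_sum_boundary
    (P := fun w => (w.map deg).sum ≤ n) (fun i w => le_trans (by simp)) hsplit (by simp) hlen

end TaylorExpansion

theorem one_le_letterDeg {d : ℕ} (i : Fin (d + 1)) : 1 ≤ letterDeg d i := by
  unfold letterDeg; split <;> norm_num

theorem vfAct_eq_wordDeriv {N d : ℕ} (V : Fin (d + 1) → (Fin N → ℝ) → (Fin N → ℝ))
    (w : List (Fin (d + 1))) (f : (Fin N → ℝ) → ℝ) : vfAct N d V w f = wordDeriv V w f := by
  induction w with
  | nil => rfl
  | cons i w ih => rw [vfAct, ih]; rfl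

theorem itIntF_reverse_eq_iteratedIntegral {d : ℕ} (ω : Fin (d + 1) → ℝ → ℝ) (g : ℝ → ℝ)
    (w : List (Fin (d + 1))) :
    itIntF d ω g w.reverse = iteratedIntegral (fun i => deriv (ω i)) 0 w g := by
  rw [iteratedIntegral, ← List.foldr_reverse]
  induction w.reverse with
  | nil => rfl
  | cons i w ih => simp only [itIntF, ih, List.foldr_cons, smul_eq_mul]

/-- Taylor expansion of solutions of non-autonomous ODEs driven by
smooth paths: for `C^∞`-bounded vector fields `V₀,…,V_d`, a `C¹` path `ω`, and the
solution `Z` of `Z'(t) = ∑ V_i(Z(t))·ωⁱ'(t)`, `Z(0) = y`, every `f ∈ C_b^∞` satisfies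
`f(Z(t)) = ∑_{deg(I) ≤ n} (V_{i₁}⋯V_{i_k} f)(y)·∫_{simplex} ω^{i₁}'⋯ω^{i_k}' + R_n(t,f)`
with the explicit remainder `R_n(t,f)` summed over words `(i₀,i₁,…,i_k)` with
`deg(i₁,…,i_k) ≤ n < deg(i₀,i₁,…,i_k)`. -/
theorem taylor_expansion_ODE (N d : ℕ) (hN : 1 ≤ N) (hd : 1 ≤ d) (T : ℝ) (hT : 0 < T)
    (V : Fin (d + 1) → (Fin N → ℝ) → (Fin N → ℝ))
    (hV : ∀ i, ContDiff ℝ (⊤ : ℕ∞) (V i))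
    (hVb : ∀ i, ∀ k : ℕ, 1 ≤ k → ∃ C : ℝ, ∀ x, ‖iteratedFDeriv ℝ k (V i) x‖ ≤ C)
    (ω : Fin (d + 1) → ℝ → ℝ) (hω : ∀ i, ContDiff ℝ 1 (ω i))
    (y : Fin N → ℝ) (Z : ℝ → Fin N → ℝ) (hZ0 : Z 0 = y)
    (hZ : ∀ s ∈ Set.Icc (0 : ℝ) T,
      HasDerivAt Z (∑ i : Fin (d + 1), deriv (ω i) s • V i (Z s)) s)
    (f : (Fin N → ℝ) → ℝ) (hf : ContDiff ℝ (⊤ : ℕ∞) f)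
    (hfb : ∀ k : ℕ, ∃ C : ℝ, ∀ x, ‖iteratedFDeriv ℝ k f x‖ ≤ C)
    (n : ℕ) :
    ∀ t ∈ Set.Icc (0 : ℝ) T,
      f (Z t) =
        (∑ k ∈ Finset.range (n + 1), ∑ v : Fin k → Fin (d + 1),
          if wordDeg d (List.ofFn v) ≤ n then
            vfAct N d V (List.ofFn v) f y *
              itIntF d ω (fun _ => 1) (List.ofFn v).reverse t
          else 0) +
        (∑ k ∈ Finset.range (n + 1), ∑ v : Fin k → Fin (d + 1), ∑ i₀ : Fin (d + 1),
          if wordDeg d (List.ofFn v) ≤ n ∧ n < wordDeg d (i₀ :: List.ofFn v) then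
            itIntF d ω (fun u => vfAct N d V (i₀ :: List.ofFn v) f (Z u))
              (i₀ :: List.ofFn v).reverse t
          else 0) := by
  intro t ht
  have hsub : [[0, t]] ⊆ Icc 0 T := uIcc_of_le ht.1 ▸ Icc_subset_Icc_right ht.2
  simpa only [wordDeg, vfAct_eq_wordDeriv, itIntF_reverse_eq_iteratedIntegral, smul_eq_mul,
    mul_comm, hZ0] using
    taylor_expansion_ODE_general one_le_letterDeg (fun i => contDiff_infty.1 (hV i) n)
      (fun i => ((hω i).continuous_deriv le_rfl).continuousOn)
      (fun s hs => (hZ s (hsub hs)).hasDerivWithinAt) (contDiff_infty.1 hf (n + 1))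

end
end
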